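/- arXiv:2504.13487 — 2 statements merged into one kernel-verified Lean document; each statement's English description precedes it below -/
import Mathlib

section
/- Let X be a complex Banach space, let ε > 0, 0 ≤ s ≤ t, M ≥ 0, and let g : ℝ → X be continuous with ‖g(r)‖ ≤ M for all r ≥ 0. Then, with T := (t − s)/ε², one has ‖ε² ∫₀^T e^{-τ} (∫₀^τ (τ − r) g(r) dr) dτ‖ ≤ 2 M min(ε², ε^{−2} (t − s)²), where the integrals are Bochner integrals. -/
/-!
A kernel `(τ - r) ^ n` integrated against a function bounded by `M` contributes at most
`M * τ ^ (n + 1) / (n + 1)`. For `n = 1` this leaves the incomplete Gamma integral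
`∫ x in 0..T, x ^ 2 * exp (-x)`, which is at most `Γ(3) = 2` and, on pulling out `T ^ 2`, at most
`T ^ 2`. For `T = (t - s) / ε ^ 2`, the prefactor `ε ^ 2` turns these into the two entries of the
minimum.
-/

section IncompleteGamma

variable {T : ℝ}

theorem integral_pow_mul_exp_neg_le_factorial (n : ℕ) (hT : 0 ≤ T) :
    ∫ x in (0 : ℝ)..T, x ^ n * Real.exp (-x) ≤ n.factorial := by
  have integrand_eq (x : ℝ) :
      Real.exp (-x) * x ^ ((n + 1 : ℝ) - 1) = x ^ n * Real.exp (-x) := by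
    rw [add_sub_cancel_right, Real.rpow_natCast, mul_comm]
  have integrable :
      MeasureTheory.IntegrableOn (fun x : ℝ => x ^ n * Real.exp (-x)) (Set.Ioi 0) := by
    simpa only [integrand_eq] using Real.GammaIntegral_convergent (s := n + 1) (by positivity)
  calc ∫ x in (0 : ℝ)..T, x ^ n * Real.exp (-x)
      = ∫ x in Set.Ioc 0 T, x ^ n * Real.exp (-x) := intervalIntegral.integral_of_le hT
    _ ≤ ∫ x in Set.Ioi 0, x ^ n * Real.exp (-x) := by
        refine MeasureTheory.setIntegral_mono_set integrable ?_
          Set.Ioc_subset_Ioi_self.eventuallyLE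
        filter_upwards [MeasureTheory.ae_restrict_mem measurableSet_Ioi] with x (hx : 0 < x)
        positivity
    _ = Real.Gamma (n + 1) := by
        simp only [Real.Gamma_eq_integral (show (0 : ℝ) < n + 1 by positivity), integrand_eq]
    _ = n.factorial := Real.Gamma_nat_eq_factorial n

theorem integral_pow_mul_exp_neg_le_pow (n : ℕ) (hT : 0 ≤ T) :
    ∫ x in (0 : ℝ)..T, x ^ n * Real.exp (-x) ≤ T ^ n := by
  calc ∫ x in (0 : ℝ)..T, x ^ n * Real.exp (-x)
      ≤ ∫ x in (0 : ℝ)..T, T ^ n * Real.exp (-x) := by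
        refine intervalIntegral.integral_mono_on hT
          (Continuous.intervalIntegrable (by fun_prop) _ _)
          (Continuous.intervalIntegrable (by fun_prop) _ _) fun x hx => ?_
        have := hx.1
        gcongr
        exact hx.2
    _ = T ^ n * (1 - Real.exp (-T)) := by simp
    _ ≤ T ^ n := mul_le_of_le_one_right (by positivity) (sub_le_self _ (Real.exp_nonneg _))

end IncompleteGamma

section NormEstimates

variable {X : Type*} [NormedAddCommGroup X] [NormedSpace ℝ X]

theorem norm_integral_sub_pow_smul_le {f : ℝ → X} {a b M : ℝ} (n : ℕ) (hab : a ≤ b)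
    (hf : ∀ r ∈ Set.Ioc a b, ‖f r‖ ≤ M) :
    ‖∫ r in a..b, (b - r) ^ n • f r‖ ≤ M * ((b - a) ^ (n + 1) / (n + 1)) := by
  calc ‖∫ r in a..b, (b - r) ^ n • f r‖
      ≤ ∫ r in a..b, (b - r) ^ n * M := by
        refine intervalIntegral.norm_integral_le_of_norm_le hab (.of_forall fun r hr => ?_)
          (Continuous.intervalIntegrable (by fun_prop) _ _)
        have weight_nonneg : 0 ≤ (b - r) ^ n := pow_nonneg (sub_nonneg.2 hr.2) n
        rw [norm_smul, Real.norm_of_nonneg weight_nonneg]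
        exact mul_le_mul_of_nonneg_left (hf r hr) weight_nonneg
    _ = M * ((b - a) ^ (n + 1) / (n + 1)) := by
        rw [intervalIntegral.integral_mul_const,
          intervalIntegral.integral_comp_sub_left (fun x => x ^ n), integral_pow, sub_self,
          zero_pow n.succ_ne_zero, sub_zero, mul_comm]

theorem norm_integral_exp_neg_smul_le {F : ℝ → X} {C T : ℝ} (n : ℕ) (hC : 0 ≤ C) (hT : 0 ≤ T)
    (hF : ∀ τ ∈ Set.Ioc 0 T, ‖F τ‖ ≤ C * τ ^ n) :
    ‖∫ τ in (0 : ℝ)..T, Real.exp (-τ) • F τ‖ ≤ C * min (n.factorial : ℝ) (T ^ n) := by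
  calc ‖∫ τ in (0 : ℝ)..T, Real.exp (-τ) • F τ‖
      ≤ ∫ τ in (0 : ℝ)..T, C * (τ ^ n * Real.exp (-τ)) := by
        refine intervalIntegral.norm_integral_le_of_norm_le hT (.of_forall fun τ hτ => ?_)
          (Continuous.intervalIntegrable (by fun_prop) _ _)
        rw [norm_smul, Real.norm_of_nonneg (Real.exp_nonneg _), ← mul_assoc, mul_comm]
        exact mul_le_mul_of_nonneg_right (hF τ hτ) (Real.exp_nonneg _)
    _ = C * ∫ τ in (0 : ℝ)..T, τ ^ n * Real.exp (-τ) := intervalIntegral.integral_const_mul _ _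
    _ ≤ C * min (n.factorial : ℝ) (T ^ n) :=
        mul_le_mul_of_nonneg_left
          (le_min (integral_pow_mul_exp_neg_le_factorial n hT)
            (integral_pow_mul_exp_neg_le_pow n hT)) hC

theorem norm_integral_exp_neg_smul_integral_sub_smul_le {g : ℝ → X} {M T : ℝ} (hT : 0 ≤ T)
    (hg : ∀ r ∈ Set.Icc 0 T, ‖g r‖ ≤ M) :
    ‖∫ τ in (0 : ℝ)..T, Real.exp (-τ) • ∫ r in (0 : ℝ)..τ, (τ - r) • g r‖
      ≤ M * min 1 (T ^ 2 / 2) := by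
  have hM : 0 ≤ M := (norm_nonneg _).trans (hg 0 ⟨le_rfl, hT⟩)
  have inner_bound : ∀ τ ∈ Set.Ioc 0 T,
      ‖∫ r in (0 : ℝ)..τ, (τ - r) • g r‖ ≤ M / 2 * τ ^ 2 := fun τ hτ => by
    have := norm_integral_sub_pow_smul_le 1 hτ.1.le
      fun r hr => hg r ⟨hr.1.le, hr.2.trans hτ.2⟩
    simp only [pow_one, sub_zero, Nat.cast_one] at this
    linarith
  calc ‖∫ τ in (0 : ℝ)..T, Real.exp (-τ) • ∫ r in (0 : ℝ)..τ, (τ - r) • g r‖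
      ≤ M / 2 * min ((2 : ℕ).factorial : ℝ) (T ^ 2) :=
        norm_integral_exp_neg_smul_le 2 (by positivity) hT inner_bound
    _ = M * min 1 (T ^ 2 / 2) := by
        rw [div_mul_eq_mul_div, mul_div_assoc, ← min_div_div_right zero_le_two]
        norm_num

end NormEstimates

theorem remainder_bound_first_general {X : Type*} [NormedAddCommGroup X] [NormedSpace ℝ X]
    [CompleteSpace X] {ε s t M : ℝ} (hε : ε ≠ 0) (hst : s ≤ t) {g : ℝ → X}
    (_hg : IntervalIntegrable g MeasureTheory.volume 0 ((t - s) / ε ^ 2))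
    (hgbound : ∀ r ∈ Set.Icc 0 ((t - s) / ε ^ 2), ‖g r‖ ≤ M) :
    ‖(ε ^ 2) • ∫ τ in (0 : ℝ)..((t - s) / ε ^ 2),
        Real.exp (-τ) • (∫ r in (0 : ℝ)..τ, (τ - r) • g r)‖
      ≤ M * min (ε ^ 2) ((ε ^ 2)⁻¹ * (t - s) ^ 2 / 2) := by
  have hT : 0 ≤ (t - s) / ε ^ 2 := div_nonneg (sub_nonneg.2 hst) (sq_nonneg ε)
  rw [norm_smul, Real.norm_of_nonneg (sq_nonneg ε)]
  calc _ ≤ ε ^ 2 * (M * min 1 (((t - s) / ε ^ 2) ^ 2 / 2)) :=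
        mul_le_mul_of_nonneg_left
          (norm_integral_exp_neg_smul_integral_sub_smul_le hT hgbound) (sq_nonneg ε)
    _ = M * min (ε ^ 2) ((ε ^ 2)⁻¹ * (t - s) ^ 2 / 2) := by
        rw [mul_left_comm, mul_min_of_nonneg _ _ (sq_nonneg ε), mul_one]
        congr 2
        field_simp

theorem remainder_bound_first {X : Type*} [NormedAddCommGroup X] [NormedSpace ℂ X]
    [CompleteSpace X] (ε : ℝ) (hε : 0 < ε) (s t : ℝ) (hs : 0 ≤ s) (hst : s ≤ t)
    (M : ℝ) (hM : 0 ≤ M) (g : ℝ → X) (hg : Continuous g)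
    (hgbound : ∀ r : ℝ, 0 ≤ r → ‖g r‖ ≤ M) :
    ‖(ε ^ 2) • ∫ τ in (0:ℝ)..((t - s) / ε ^ 2),
        Real.exp (-τ) • (∫ r in (0:ℝ)..τ, (τ - r) • g r)‖
      ≤ 2 * M * min (ε ^ 2) ((ε ^ 2)⁻¹ * (t - s) ^ 2) := by
  refine (remainder_bound_first_general hε.ne' hst (hg.intervalIntegrable _ _)
    fun r hr => hgbound r hr.1).trans ?_
  gcongr
  · exact le_mul_of_one_le_left hM one_le_two
  · exact half_le_self (by positivity)
end

section
/- Let X be a complex Banach space, let ε > 0, 0 ≤ s ≤ t, M ≥ 0, and let h : ℝ → X be continuous with ‖h(r)‖ ≤ M for all r. Then, with T := (t − s)/ε², one has ‖∫₀^T e^{-τ} (∫_{t − ε²τ}^{t} h(r) dr) dτ‖ ≤ M min(ε², ε^{−2} (t − s)²), where the integrals are Bochner integrals. -/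
/-!
Since `‖h‖ ≤ M`, the inner integral over `[t - δ * τ, t]`, with `δ = ε ^ 2`, has norm at most
`M * δ * τ`. So the whole expression is at most `M * δ` times the truncated first moment
`∫ τ in 0..T, τ * exp (-τ)` of the exponential distribution. The full first moment `1` gives the
bound uniform in `t - s`; the bound `exp (-τ) ≤ 1` gives `T ^ 2 / 2`, which is better for short
times.
-/

open MeasureTheory Set

theorem integral_mul_exp_neg (a b : ℝ) :
    ∫ τ in a..b, τ * Real.exp (-τ) = (a + 1) * Real.exp (-a) - (b + 1) * Real.exp (-b) := by
  have hderiv (x : ℝ) :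
      HasDerivAt (fun τ : ℝ ↦ -((τ + 1) * Real.exp (-τ))) (x * Real.exp (-x)) x := by
    refine (((hasDerivAt_id' x).add_const 1).mul (hasDerivAt_neg' x).exp).neg.congr_deriv ?_
    ring
  have hcont : Continuous fun τ : ℝ ↦ τ * Real.exp (-τ) := by fun_prop
  rw [intervalIntegral.integral_eq_sub_of_hasDerivAt (fun x _ ↦ hderiv x)
    (hcont.intervalIntegrable a b)]
  ring

theorem integral_zero_mul_exp_neg_le_one {T : ℝ} (hT : -1 ≤ T) :
    ∫ τ in (0 : ℝ)..T, τ * Real.exp (-τ) ≤ 1 := by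
  have htail : 0 ≤ (T + 1) * Real.exp (-T) :=
    mul_nonneg (neg_le_iff_add_nonneg.mp hT) (Real.exp_pos _).le
  simpa only [integral_mul_exp_neg, zero_add, neg_zero, Real.exp_zero, mul_one] using
    sub_le_self 1 htail

theorem integral_zero_mul_exp_neg_le_sq_div_two {T : ℝ} (hT : 0 ≤ T) :
    ∫ τ in (0 : ℝ)..T, τ * Real.exp (-τ) ≤ T ^ 2 / 2 := by
  calc ∫ τ in (0 : ℝ)..T, τ * Real.exp (-τ)
      ≤ ∫ τ in (0 : ℝ)..T, τ := by
        refine intervalIntegral.integral_mono_on hT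
          (Continuous.intervalIntegrable (by fun_prop) 0 T) intervalIntegral.intervalIntegrable_id
          fun τ hτ ↦ mul_le_of_le_one_right hτ.1 ?_
        exact Real.exp_le_one_iff.mpr (neg_nonpos.mpr hτ.1)
    _ = T ^ 2 / 2 := by rw [integral_id, zero_pow two_ne_zero, sub_zero]

section

variable {X : Type*} [NormedAddCommGroup X] [NormedSpace ℝ X] {h : ℝ → X} {M δ t : ℝ}

theorem norm_integral_sub_mul_le {τ T : ℝ} (hδ : 0 ≤ δ) (hτ : τ ∈ Icc 0 T)
    (hbound : ∀ᵐ r, r ∈ Ioc (t - δ * T) t → ‖h r‖ ≤ M) :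
    ‖∫ r in (t - δ * τ)..t, h r‖ ≤ M * (δ * τ) := by
  have hδτ : 0 ≤ δ * τ := mul_nonneg hδ hτ.1
  have hsubset : uIoc (t - δ * τ) t ⊆ Ioc (t - δ * T) t := by
    rw [uIoc_of_le (sub_le_self t hδτ)]
    exact Ioc_subset_Ioc_left (sub_le_sub_left (mul_le_mul_of_nonneg_left hτ.2 hδ) t)
  simpa only [sub_sub_cancel, abs_of_nonneg hδτ] using
    intervalIntegral.norm_integral_le_of_norm_le_const_ae
      (hbound.mono fun r hr hmem ↦ hr (hsubset hmem))

theorem norm_integral_smul_integral_sub_mul_le {k : ℝ → ℝ} {T : ℝ} (hδ : 0 ≤ δ) (hT : 0 ≤ T)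
    (hk : IntervalIntegrable (fun τ ↦ τ * |k τ|) volume 0 T)
    (hbound : ∀ᵐ r, r ∈ Ioc (t - δ * T) t → ‖h r‖ ≤ M) :
    ‖∫ τ in (0 : ℝ)..T, k τ • ∫ r in (t - δ * τ)..t, h r‖
      ≤ M * δ * ∫ τ in (0 : ℝ)..T, τ * |k τ| := by
  rw [← intervalIntegral.integral_const_mul]
  refine intervalIntegral.norm_integral_le_of_norm_le hT
    (Filter.Eventually.of_forall fun τ hτ ↦ ?_) (hk.const_mul (M * δ))
  calc ‖k τ • ∫ r in (t - δ * τ)..t, h r‖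
      = |k τ| * ‖∫ r in (t - δ * τ)..t, h r‖ := by rw [norm_smul, Real.norm_eq_abs]
    _ ≤ |k τ| * (M * (δ * τ)) := by
        gcongr
        exact norm_integral_sub_mul_le hδ (Ioc_subset_Icc_self hτ) hbound
    _ = M * δ * (τ * |k τ|) := by ring

theorem remainder_bound_second_general [CompleteSpace X] {s : ℝ} (hδ : 0 < δ) (hst : s ≤ t)
    (hM : 0 ≤ M) (_hmeas : AEStronglyMeasurable h (volume.restrict (Ioc s t)))
    (hbound : ∀ᵐ r, r ∈ Ioc s t → ‖h r‖ ≤ M) :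
    ‖∫ τ in (0 : ℝ)..((t - s) / δ), Real.exp (-τ) • ∫ r in (t - δ * τ)..t, h r‖
      ≤ M * min δ (δ⁻¹ * (t - s) ^ 2 / 2) := by
  have hT : 0 ≤ (t - s) / δ := div_nonneg (sub_nonneg.mpr hst) hδ.le
  have hstart : t - δ * ((t - s) / δ) = s := by rw [mul_div_cancel₀ _ hδ.ne', sub_sub_cancel]
  have hmoment : ‖∫ τ in (0 : ℝ)..((t - s) / δ), Real.exp (-τ) • ∫ r in (t - δ * τ)..t, h r‖
      ≤ M * δ * ∫ τ in (0 : ℝ)..((t - s) / δ), τ * Real.exp (-τ) := by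
    simpa only [Real.abs_exp] using
      norm_integral_smul_integral_sub_mul_le (k := fun τ ↦ Real.exp (-τ)) hδ.le hT
        (Continuous.intervalIntegrable (by fun_prop) _ _) (hstart.symm ▸ hbound)
  calc _ ≤ M * δ * ∫ τ in (0 : ℝ)..((t - s) / δ), τ * Real.exp (-τ) := hmoment
    _ ≤ M * δ * min 1 (((t - s) / δ) ^ 2 / 2) := by
        gcongr
        exact le_min (integral_zero_mul_exp_neg_le_one (neg_one_lt_zero.le.trans hT))
          (integral_zero_mul_exp_neg_le_sq_div_two hT)
    _ = M * min δ (δ⁻¹ * (t - s) ^ 2 / 2) := by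
        rw [mul_assoc, mul_min_of_nonneg _ _ hδ.le, mul_one]
        field_simp

end

theorem remainder_bound_second {X : Type*} [NormedAddCommGroup X] [NormedSpace ℂ X]
    [CompleteSpace X] (ε : ℝ) (hε : 0 < ε) (s t : ℝ) (hs : 0 ≤ s) (hst : s ≤ t)
    (M : ℝ) (hM : 0 ≤ M) (h : ℝ → X) (hh : Continuous h)
    (hhbound : ∀ r : ℝ, ‖h r‖ ≤ M) :
    ‖∫ τ in (0:ℝ)..((t - s) / ε ^ 2),
        Real.exp (-τ) • (∫ r in (t - ε ^ 2 * τ)..t, h r)‖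
      ≤ M * min (ε ^ 2) ((ε ^ 2)⁻¹ * (t - s) ^ 2) :=
  (remainder_bound_second_general (pow_pos hε 2) hst hM hh.aestronglyMeasurable
    (.of_forall fun r _ ↦ hhbound r)).trans <|
    mul_le_mul_of_nonneg_left (min_le_min_left _ (half_le_self (by positivity))) hM
end
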